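/- arXiv:1004.5387 — 11 statements merged into one kernel-verified Lean document; each statement's English description precedes it below -/
import Mathlib

section
/- Let N be a positive odd integer and let m be an integer with m = 2N or m ≥ 2N+2. Then the family of polynomials S_{N,m} = { F_{N+m,j} : 1 ≤ j ≤ N, j odd } is linearly independent over ℂ. -/
section
open MvPolynomial

/-- The polynomial `F_{n,j}(u,v) = u^{n-j}(v-w)^j + v^{n-j}(w-u)^j + w^{n-j}(u-v)^j`
where `w = -(u+v)`. -/
noncomputable def F (n j : ℕ) : MvPolynomial (Fin 2) ℂ :=
  let u : MvPolynomial (Fin 2) ℂ := X 0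
  let v : MvPolynomial (Fin 2) ℂ := X 1
  let w : MvPolynomial (Fin 2) ℂ := -(u + v)
  u ^ (n - j) * (v - w) ^ j + v ^ (n - j) * (w - u) ^ j + w ^ (n - j) * (u - v) ^ j

end

open Polynomial in
lemma aux_iter_comp (f : ℂ[X]) (d : ℕ) :
    derivative^[d] (f.comp (-1 - X)) = (-1) ^ d * (derivative^[d] f).comp (-1 - X) := by
  induction d with
  | zero => simp
  | succ d ih =>
    rw [Function.iterate_succ_apply', ih, Function.iterate_succ_apply',
      show ((-1 : ℂ[X]) ^ d) = C ((-1) ^ d) by simp, derivative_C_mul, derivative_comp]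
    simp
    ring

lemma aux_sum (n : ℕ) : ∀ p y : ℕ, 1 ≤ p →
    0 < ∑ k ∈ Finset.range (n + 1),
      (-1 : ℝ) ^ k * (n.choose k) * ((y + k).factorial / (y + k + p).factorial) := by
  have key : ∀ (n p y : ℕ), ∑ k ∈ Finset.range (n + 1),
      (-1 : ℝ) ^ k * (n.choose k) * ((y + k).factorial / (y + k + p).factorial)
      = (p.ascFactorial n) * (y.factorial / (y + p + n).factorial) := by
    intro n
    induction n with
    | zero => intro p y; simp
    | succ n ih =>
      intro p y
      have h1 : ∑ k ∈ Finset.range (n + 1 + 1),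
          (-1 : ℝ) ^ k * ((n + 1).choose k) * ((y + k).factorial / (y + k + p).factorial)
          = ∑ k ∈ Finset.range (n + 1),
            (-1 : ℝ) ^ k * (n.choose k) * ((y + k).factorial / (y + k + p).factorial)
          - ∑ k ∈ Finset.range (n + 1),
            (-1 : ℝ) ^ k * (n.choose k) * ((y + 1 + k).factorial / (y + 1 + k + p).factorial) := by
        rw [Finset.sum_range_succ' _ (n + 1)]
        have h2 : ∑ k ∈ Finset.range (n + 1),
            (-1 : ℝ) ^ k * (n.choose k) * ((y + k).factorial / (y + k + p).factorial)
            = ∑ k ∈ Finset.range (n + 1),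
            (-1 : ℝ) ^ (k + 1) * (n.choose (k + 1)) *
              ((y + (k + 1)).factorial / (y + (k + 1) + p).factorial)
            + (-1 : ℝ) ^ 0 * (n.choose 0) * ((y + 0).factorial / (y + 0 + p).factorial) := by
          rw [← Finset.sum_range_succ' (fun k => (-1 : ℝ) ^ k * (n.choose k) *
            ((y + k).factorial / (y + k + p).factorial)) (n + 1), Finset.sum_range_succ _ (n + 1)]
          simp
        rw [h2, add_sub_right_comm, ← Finset.sum_sub_distrib]
        congr 1
        · apply Finset.sum_congr rfl
          intro k _
          rw [Nat.choose_succ_succ, show y + 1 + k = y + (k + 1) by ring]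
          push_cast
          ring
        · simp
      rw [h1, ih, ih, show y + 1 + p + n = (y + p + n) + 1 by ring,
        show y + p + (n + 1) = (y + p + n) + 1 by ring, Nat.factorial_succ (y + p + n),
        Nat.factorial_succ y, Nat.ascFactorial_succ]
      have : ((y + p + n).factorial : ℝ) ≠ 0 := by positivity
      push_cast
      field_simp
      ring
  intro p y hp
  rw [key]
  have : 0 < p.ascFactorial n := by
    obtain ⟨q, rfl⟩ := Nat.exists_eq_add_of_le' hp
    exact Nat.ascFactorial_pos _ _
  positivity

open Polynomial in
lemma aux_zero (f : ℂ[X]) (m d : ℕ) (hd : d ≤ m) (hf : X ^ m ∣ f)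
    (h : derivative^[d] f = 0) : f = 0 := by
  ext i
  rcases lt_or_ge i m with hi | hi
  · simpa using (X_pow_dvd_iff.1 hf) i hi
  · have := congrArg (fun q => q.coeff (i - d)) h
    simp only [coeff_iterate_derivative, coeff_zero] at this
    rw [Nat.sub_add_cancel (hd.trans hi)] at this
    rw [nsmul_eq_mul, mul_eq_zero] at this
    rcases this with h0 | h0
    · exfalso
      have h0 : i.descFactorial d = 0 := by exact_mod_cast h0
      rw [Nat.descFactorial_eq_zero_iff_lt] at h0
      omega
    · simpa using h0

open Polynomial in
/-- explicit iterated antiderivative of `X^k (1+X)^k` -/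
noncomputable def auxG (k p : ℕ) : ℂ[X] :=
  ∑ i ∈ Finset.range (k + 1),
    C ((k.choose i : ℂ) * ((k + i).factorial / (k + i + p).factorial)) * X ^ (k + i + p)

open Polynomial in
lemma auxG_der (k p : ℕ) : derivative^[p] (auxG k p) = X ^ k * (1 + X) ^ k := by
  rw [auxG, add_comm (1 : ℂ[X]) X, add_pow, iterate_derivative_sum, Finset.mul_sum]
  apply Finset.sum_congr rfl
  intro i _
  rw [iterate_derivative_C_mul, iterate_derivative_X_pow_eq_natCast_mul, Nat.add_sub_cancel]
  have h1 : ((k + i).factorial : ℂ) * ((k + i + p).descFactorial p : ℂ)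
      = ((k + i + p).factorial : ℂ) := by
    have := Nat.factorial_mul_descFactorial (n := k + i + p) (k := p) (by omega)
    rw [Nat.add_sub_cancel] at this
    exact_mod_cast this
  have h2 : ((k + i + p).factorial : ℂ) ≠ 0 := by exact_mod_cast Nat.factorial_ne_zero _
  have h3 : (k.choose i : ℂ) * ((k + i).factorial / (k + i + p).factorial) *
      ((k + i + p).descFactorial p : ℂ) = k.choose i := by
    rw [mul_assoc, div_mul_eq_mul_div, h1, div_self h2, mul_one]
  rw [← C_eq_natCast ((k + i + p).descFactorial p), ← mul_assoc, ← C_mul, h3, C_eq_natCast]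
  simp only [one_pow]
  ring

open Polynomial in
lemma auxG_eval (k p : ℕ) (hp : 1 ≤ p) : (auxG k p).eval (-1) ≠ 0 := by
  have h := aux_sum k p k hp
  have : (auxG k p).eval (-1) = (-1) ^ (k + p) * ((∑ i ∈ Finset.range (k + 1),
      (-1 : ℝ) ^ i * (k.choose i) * ((k + i).factorial / (k + i + p).factorial) : ℝ) : ℂ) := by
    rw [auxG, eval_finsetSum]
    push_cast
    rw [Finset.mul_sum]
    apply Finset.sum_congr rfl
    intro i _
    simp
    ring
  rw [this]
  apply mul_ne_zero
  · simp
  · exact_mod_cast h.ne'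

open Polynomial in
/-- The univariate core: `f = X^m A`, `f - f(-1-X) + B = 0`. -/
lemma aux_core (N m : ℕ) (hN : Odd N) (hm : m = 2 * N ∨ m ≥ 2 * N + 2)
    (f B : ℂ[X]) (hf : X ^ m ∣ f) (hdeg : f.natDegree ≤ m + N) (hB : B.natDegree ≤ N)
    (hrel : f - f.comp (-1 - X) + B = 0)
    (hev : f.coeff (m + N) = 0 → f.eval (-1) = 0) : f = 0 := by
  have hNpos : 1 ≤ N := hN.pos
  have hd : N + 1 ≤ m := by omega
  set h := derivative^[N + 1] f with hh
  have hB0 : derivative^[N + 1] B = 0 := iterate_derivative_eq_zero (by omega)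
  have hsym : h = h.comp (-1 - X) := by
    have := congrArg (fun q => derivative^[N + 1] q) hrel
    simp only [iterate_map_add, iterate_map_sub, hB0, aux_iter_comp, iterate_map_zero] at this
    rw [hN.add_one.neg_one_pow, one_mul, add_zero] at this
    exact sub_eq_zero.1 this
  obtain ⟨k, hk⟩ : ∃ k, m = k + (N + 1) := ⟨m - (N + 1), by omega⟩
  have hdv : X ^ k ∣ h := by
    have := pow_sub_dvd_iterate_derivative_of_pow_dvd (N + 1) hf
    rwa [show m - (N + 1) = k by omega] at this
  have hdv2 : (1 + X) ^ k ∣ h := by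
    obtain ⟨q, hq⟩ := hdv
    refine ⟨(-1) ^ k * q.comp (-1 - X), ?_⟩
    rw [hsym, hq]
    simp only [mul_comp, pow_comp, X_comp]
    rw [← mul_assoc, ← mul_pow]
    congr 2
    ring
  have hcop : IsCoprime ((X : ℂ[X]) ^ k) ((1 + X) ^ k) := by
    apply IsCoprime.pow
    exact ⟨-1, 1, by ring⟩
  obtain ⟨L, hL⟩ := hcop.mul_dvd hdv hdv2
  have hhdeg : h.natDegree ≤ m - 1 := by
    have := natDegree_iterate_derivative f (N + 1)
    rw [← hh] at this
    omega
  have hmon : ((X : ℂ[X]) ^ k * (1 + X) ^ k).Monic := by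
    apply Monic.mul (monic_X_pow k)
    apply Monic.pow
    rw [add_comm]
    exact monic_X_add_C 1
  have hmd : ((X : ℂ[X]) ^ k * (1 + X) ^ k).natDegree = 2 * k := by
    rw [(monic_X_pow k).natDegree_mul (by rw [add_comm]; exact (monic_X_add_C 1).pow k),
      natDegree_X_pow, natDegree_pow, add_comm 1 X,
      show (X + 1 : ℂ[X]).natDegree = 1 from natDegree_X_add_C 1]
    ring
  by_cases hL0 : L = 0
  · apply aux_zero f m (N + 1) hd hf
    rw [← hh, hL, hL0, mul_zero]
  have hLd : 2 * k + L.natDegree ≤ m - 1 := by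
    rw [hL, hmon.natDegree_mul' hL0, hmd] at hhdeg
    exact hhdeg
  rcases hm with hm | hm
  swap
  · omega
  have hkN : k + 1 = N := by omega
  have hkev : Even k := by
    rcases Nat.even_or_odd k with h' | h'
    · exact h'
    · exfalso
      have := h'.add_one
      rw [hkN] at this
      exact (Nat.not_even_iff_odd.2 hN) this
  have hL1 : L.natDegree ≤ 1 := by omega
  have hLsym : L = L.comp (-1 - X) := by
    have h1 := hsym
    rw [hL] at h1
    simp only [mul_comp, pow_comp, X_comp, add_comp, one_comp] at h1
    have h2 : (-1 - X : ℂ[X]) ^ k * (1 + (-1 - X)) ^ k = X ^ k * (1 + X) ^ k := by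
      rw [show (-1 - X : ℂ[X]) = -(1 + X) by ring, hkev.neg_pow,
        show (1 + -(1 + X) : ℂ[X]) = -X by ring, hkev.neg_pow]
      ring
    rw [h2] at h1
    exact mul_left_cancel₀ hmon.ne_zero h1
  obtain ⟨a, b, rfl⟩ := exists_eq_X_add_C_of_natDegree_le_one hL1
  have ha : a = 0 := by
    have := congrArg (fun q => q.coeff 1) hLsym
    simp [mul_sub, coeff_X, coeff_one, coeff_C] at this
    have h2 : (2 : ℂ) * a = 0 := by linear_combination this
    simpa using h2
  subst ha
  have hfG : f = C b * auxG k (N + 1) := by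
    rw [← sub_eq_zero]
    apply aux_zero _ m (N + 1) hd
    · apply dvd_sub hf
      apply Dvd.dvd.mul_left
      apply Finset.dvd_sum
      intro i _
      apply Dvd.dvd.mul_left
      apply pow_dvd_pow
      omega
    · rw [iterate_map_sub, iterate_derivative_C_mul, auxG_der, ← hh, hL]
      simp
      ring
  have hc : f.coeff (m + N) = 0 := by
    rw [hfG, coeff_C_mul, auxG, finsetSum_coeff]
    apply mul_eq_zero_of_right
    apply Finset.sum_eq_zero
    intro i hi
    rw [Finset.mem_range] at hi
    rw [coeff_C_mul, coeff_X_pow, if_neg (by omega), mul_zero]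
  have he := hev hc
  rw [hfG, eval_mul, eval_C, mul_eq_zero] at he
  rcases he with he | he
  · rw [hfG, he]; simp
  · exact absurd he (auxG_eval k (N + 1) (by omega))

open Polynomial in
lemma aux_indep {ι : Type*} (s : Finset ι) (g : ι → ℂ) (j : ι → ℕ) (hj : Function.Injective j)
    (n : ℕ) (hn : ∀ i, j i ≤ n)
    (h : ∑ i ∈ s, C (g i) * ((X : ℂ[X]) ^ (n - j i) * (X + 2) ^ j i) = 0) :
    ∀ i ∈ s, g i = 0 := by
  have hq : (∑ i ∈ s, C (g i) * (X : ℂ[X]) ^ j i) = 0 := by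
    apply eq_zero_of_infinite_isRoot
    apply Set.Infinite.mono (s := {t : ℂ | t ≠ 1})
    · intro t ht
      have ht' : t - 1 ≠ 0 := sub_ne_zero.2 ht
      have h1 := congrArg (eval (2 / (t - 1))) h
      simp only [eval_finsetSum, eval_mul, eval_C, eval_pow, eval_X, eval_add, eval_zero,
        eval_ofNat] at h1
      simp only [Set.mem_ofPred_eq, IsRoot, eval_finsetSum, eval_mul, eval_C, eval_pow, eval_X]
      have hx : (2 / (t - 1)) ≠ 0 := div_ne_zero two_ne_zero ht'
      have h2 : (2 / (t - 1)) ^ n * ∑ i ∈ s, g i * t ^ j i = 0 := by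
        rw [← h1, Finset.mul_sum]
        apply Finset.sum_congr rfl
        intro i _
        have h3 : 2 / (t - 1) + 2 = (2 / (t - 1)) * t := by field_simp; ring
        rw [h3, mul_pow]
        nth_rewrite 1 [← Nat.sub_add_cancel (hn i)]
        rw [pow_add]
        ring
      exact (mul_eq_zero.1 h2).resolve_left (pow_ne_zero _ hx)
    · exact (Set.finite_singleton (1 : ℂ)).infinite_compl
  intro i hi
  have := congrArg (fun q => q.coeff (j i)) hq
  simp only [finsetSum_coeff, coeff_C_mul, coeff_X_pow, coeff_zero, mul_ite, mul_one,
    mul_zero] at this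
  rw [Finset.sum_eq_single i] at this
  · simpa using this
  · intro b _ hb
    rw [if_neg (fun e => hb (hj e).symm)]
  · intro h'
    exact absurd hi h'

/-- Proposition 1.1: for `N` a positive odd integer and `m = 2N` or `m ≥ 2N+2`, the family
`S_{N,m} = {F_{N+m,j} : 1 ≤ j ≤ N, j odd}` is linearly independent over `ℂ`. -/
theorem stmt_0 (N m : ℕ) (hNodd : Odd N) (hNpos : 1 ≤ N)
    (hm : m = 2 * N ∨ m ≥ 2 * N + 2) :
    LinearIndependent ℂ
      (fun j : {j : ℕ // 1 ≤ j ∧ j ≤ N ∧ Odd j} => F (N + m) j.1) := by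
  rw [linearIndependent_iff']
  intro s g hg
  set f : Polynomial ℂ := ∑ i ∈ s, Polynomial.C (g i) *
    ((Polynomial.X : Polynomial ℂ) ^ (N + m - i.1) * (Polynomial.X + 2) ^ i.1) with hf
  have hterm : ∀ i : {j : ℕ // 1 ≤ j ∧ j ≤ N ∧ Odd j},
      ((Polynomial.X : Polynomial ℂ) ^ (N + m - i.1) * (Polynomial.X + 2) ^ i.1).natDegree
        = m + N ∧
      ((Polynomial.X : Polynomial ℂ) ^ (N + m - i.1) * (Polynomial.X + 2) ^ i.1).Monic := by
    intro i
    have h2 : ((Polynomial.X + 2 : Polynomial ℂ) ^ i.1).Monic :=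
      (Polynomial.monic_X_add_C (2 : ℂ)).pow _
    have hi := i.2
    refine ⟨?_, (Polynomial.monic_X_pow _).mul h2⟩
    rw [(Polynomial.monic_X_pow _).natDegree_mul h2, Polynomial.natDegree_X_pow,
      Polynomial.natDegree_pow,
      show (Polynomial.X + 2 : Polynomial ℂ).natDegree = 1 from Polynomial.natDegree_X_add_C 2]
    omega
  have hf0 : f = 0 := by
    apply aux_core N m hNodd hm f
      (∑ i ∈ s, Polynomial.C (g i) * (-1 - 2 * (Polynomial.X : Polynomial ℂ)) ^ i.1)
    · apply Finset.dvd_sum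
      intro i _
      apply Dvd.dvd.mul_left
      apply Dvd.dvd.mul_right
      apply pow_dvd_pow
      have := i.2
      omega
    · apply Polynomial.natDegree_sum_le_of_forall_le
      intro i _
      exact (Polynomial.natDegree_C_mul_le _ _).trans (hterm i).1.le
    · apply Polynomial.natDegree_sum_le_of_forall_le
      intro i _
      refine (Polynomial.natDegree_C_mul_le _ _).trans ?_
      refine (Polynomial.natDegree_pow_le_of_le (m := 1) i.1 ?_).trans ?_
      · compute_degree
      · have := i.2
        omega
    · have := congrArg (MvPolynomial.aeval (R := ℂ)
        (![Polynomial.X, 1] : Fin 2 → Polynomial ℂ)) hg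
      rw [map_sum, map_zero] at this
      rw [← this, hf, Polynomial.sum_comp, ← Finset.sum_sub_distrib,
        ← Finset.sum_add_distrib]
      apply Finset.sum_congr rfl
      intro i _
      have hodd : Odd i.1 := i.2.2.2
      simp only [F, map_smul, map_add, map_mul, map_pow, map_sub, map_neg, MvPolynomial.aeval_X,
        Matrix.cons_val_zero, Matrix.cons_val_one, Polynomial.smul_eq_C_mul,
        Polynomial.mul_comp, Polynomial.C_comp, Polynomial.pow_comp, Polynomial.X_comp,
        Polynomial.add_comp, Polynomial.ofNat_comp, one_pow]
      rw [show (Polynomial.X - 1 : Polynomial ℂ) = -(-1 - Polynomial.X + 2) by ring,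
        hodd.neg_pow]
      ring
    · intro hc
      have h1 : f.coeff (m + N) = ∑ i ∈ s, g i := by
        rw [hf, Polynomial.finsetSum_coeff]
        apply Finset.sum_congr rfl
        intro i _
        rw [Polynomial.coeff_C_mul]
        have h2 := (hterm i).2.coeff_natDegree
        rw [(hterm i).1] at h2
        rw [h2, mul_one]
      have h3 : f.eval (-1) = (-1) ^ m * ∑ i ∈ s, g i := by
        rw [hf, Polynomial.eval_finsetSum, Finset.mul_sum]
        apply Finset.sum_congr rfl
        intro i _
        have hev : Even (N - i.1) := Nat.Odd.sub_odd hNodd i.2.2.2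
        have h4 : N + m - i.1 = (N - i.1) + m := by
          have := i.2
          omega
        simp only [Polynomial.eval_mul, Polynomial.eval_C, Polynomial.eval_pow,
          Polynomial.eval_X, Polynomial.eval_add, Polynomial.eval_ofNat]
        rw [h4, pow_add, hev.neg_one_pow, show (-1 + 2 : ℂ) = 1 by norm_num]
        simp
        ring
      rw [h3, ← h1, hc, mul_zero]
  exact aux_indep s g (fun i => i.1) Subtype.val_injective (N + m)
    (fun i => by have := i.2; omega) hf0
end

section
/- For all integers n and j with 1 ≤ j ≤ n−2, the polynomial identity (∂²/∂u² + ∂²/∂v² − ∂²/∂u∂v) F_{n,j} = (n−j)(n−j−1) F_{n−2,j} + 3j(j−1) F_{n−2,j−2} holds in ℂ[u,v], where the last term is interpreted as 0 when j = 1 (its coefficient 3j(j−1) vanishes). -/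
open MvPolynomial

/-- The operator applied to a product of powers of two linear forms with gradients
`(a, b)` and `(c, d)` that are orthogonal for the associated quadratic form. -/
lemma op_aux (p q : MvPolynomial (Fin 2) ℂ) (a b c d : ℤ)
    (hp0 : pderiv 0 p = (a : MvPolynomial (Fin 2) ℂ))
    (hp1 : pderiv 1 p = (b : MvPolynomial (Fin 2) ℂ))
    (hq0 : pderiv 0 q = (c : MvPolynomial (Fin 2) ℂ))
    (hq1 : pderiv 1 q = (d : MvPolynomial (Fin 2) ℂ))
    (h1 : a ^ 2 + b ^ 2 - a * b = 1) (h2 : c ^ 2 + d ^ 2 - c * d = 3)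
    (h3 : 2 * a * c + 2 * b * d - a * d - b * c = 0) (m k : ℕ) :
    pderiv (0 : Fin 2) (pderiv (0 : Fin 2) (p ^ m * q ^ k))
      + pderiv (1 : Fin 2) (pderiv (1 : Fin 2) (p ^ m * q ^ k))
      - pderiv (0 : Fin 2) (pderiv (1 : Fin 2) (p ^ m * q ^ k))
    = ((m * (m - 1) : ℕ) : MvPolynomial (Fin 2) ℂ) * (p ^ (m - 2) * q ^ k)
      + ((3 * k * (k - 1) : ℕ) : MvPolynomial (Fin 2) ℂ) * (p ^ m * q ^ (k - 2)) := by
  have h1' : (a : MvPolynomial (Fin 2) ℂ) ^ 2 + b ^ 2 - a * b = 1 := by exact_mod_cast h1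
  have h2' : (c : MvPolynomial (Fin 2) ℂ) ^ 2 + d ^ 2 - c * d = 3 := by exact_mod_cast h2
  have h3' : 2 * (a : MvPolynomial (Fin 2) ℂ) * c + 2 * b * d - a * d - b * c = 0 := by
    exact_mod_cast h3
  have hi : ∀ (i : Fin 2) (z : ℤ), pderiv i (z : MvPolynomial (Fin 2) ℂ) = 0 := fun i z =>
    Derivation.map_intCast _ z
  have hn : ∀ (i : Fin 2) (z : ℕ), pderiv i (z : MvPolynomial (Fin 2) ℂ) = 0 := fun i z =>
    Derivation.map_natCast _ z
  simp only [Derivation.leibniz, Derivation.leibniz_pow, hp0, hp1, hq0, hq1, map_add, smul_eq_mul,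
    nsmul_eq_mul, hi, hn, Nat.sub_sub, Nat.reduceAdd]
  push_cast
  linear_combination
    ((m : MvPolynomial (Fin 2) ℂ) * ((m - 1 : ℕ) : MvPolynomial (Fin 2) ℂ)
      * p ^ (m - 2) * q ^ k) * h1'
    + ((k : MvPolynomial (Fin 2) ℂ) * ((k - 1 : ℕ) : MvPolynomial (Fin 2) ℂ)
      * p ^ m * q ^ (k - 2)) * h2'
    + ((m : MvPolynomial (Fin 2) ℂ) * (k : MvPolynomial (Fin 2) ℂ)
      * p ^ (m - 1) * q ^ (k - 1)) * h3'

/-- Lemma 1.2(a): `(∂²/∂u² + ∂²/∂v² − ∂²/∂u∂v) F_{n,j}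
  = (n−j)(n−j−1) F_{n−2,j} + 3j(j−1) F_{n−2,j−2}` for `1 ≤ j ≤ n−2`. -/
theorem stmt_1 (n j : ℕ) (hj : 1 ≤ j) (hjn : j ≤ n - 2) :
    pderiv (0 : Fin 2) (pderiv (0 : Fin 2) (F n j))
      + pderiv (1 : Fin 2) (pderiv (1 : Fin 2) (F n j))
      - pderiv (0 : Fin 2) (pderiv (1 : Fin 2) (F n j))
    = C (((n - j) * (n - j - 1) : ℕ) : ℂ) * F (n - 2) j
      + C ((3 * j * (j - 1) : ℕ) : ℂ) * F (n - 2) (j - 2) := by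
  have e00 : pderiv (0 : Fin 2) (X 0 : MvPolynomial (Fin 2) ℂ) = 1 := pderiv_X_self _
  have e11 : pderiv (1 : Fin 2) (X 1 : MvPolynomial (Fin 2) ℂ) = 1 := pderiv_X_self _
  have e01 : pderiv (0 : Fin 2) (X 1 : MvPolynomial (Fin 2) ℂ) = 0 :=
    pderiv_X_of_ne (by decide)
  have e10 : pderiv (1 : Fin 2) (X 0 : MvPolynomial (Fin 2) ℂ) = 0 :=
    pderiv_X_of_ne (by decide)
  have A := op_aux (X 0) (X 1 - -(X 0 + X 1)) 1 0 1 2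
    (by simp [e00]) (by simp [e10]) (by simp [e00, e01])
    (by simp [e10, e11]; norm_num) (by norm_num) (by norm_num) (by norm_num) (n - j) j
  have B := op_aux (X 1) (-(X 0 + X 1) - X 0) 0 1 (-2) (-1)
    (by simp [e01]) (by simp [e11]) (by simp [e00, e01]; norm_num)
    (by simp [e10, e11]) (by norm_num) (by norm_num) (by norm_num) (n - j) j
  have D := op_aux (-(X 0 + X 1)) (X 0 - X 1) (-1) (-1) 1 (-1)
    (by simp [e00, e01]) (by simp [e10, e11]) (by simp [e00, e01])
    (by simp [e10, e11]) (by norm_num) (by norm_num) (by norm_num) (n - j) j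
  have hm : n - 2 - j = n - j - 2 := by omega
  have hC : ∀ z : ℕ, (C (z : ℂ) : MvPolynomial (Fin 2) ℂ) = z := fun z => map_natCast C z
  rw [hC, hC]
  simp only [F, map_add, hm]
  rcases Nat.lt_or_ge j 2 with h | h
  · obtain rfl : j = 1 := by omega
    simp only [Nat.sub_self, mul_zero, Nat.cast_zero, zero_mul, add_zero] at A B D ⊢
    linear_combination A + B + D
  · have hk : n - 2 - (j - 2) = n - j := by omega
    rw [hk]
    linear_combination A + B + D
end

section
/- For all integers n and j with 0 ≤ j ≤ n, the identity 4(u² + uv + v²) · F_{n,j} = 3 F_{n+2,j} + F_{n+2,j+2} holds in ℂ[u,v]. -/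
open MvPolynomial

/-- Lemma 1.2(b): `4(u² + uv + v²) F_{n,j} = 3 F_{n+2,j} + F_{n+2,j+2}` for `0 ≤ j ≤ n`. -/
theorem stmt_2 (n j : ℕ) (hjn : j ≤ n) :
    4 * ((X 0 : MvPolynomial (Fin 2) ℂ) ^ 2 + X 0 * X 1 + X 1 ^ 2) * F n j
      = 3 * F (n + 2) j + F (n + 2) (j + 2) := by
  obtain ⟨k, rfl⟩ := Nat.exists_eq_add_of_le hjn
  have h1 : j + k - j = k := by omega
  have h2 : j + k + 2 - j = k + 2 := by omega
  have h3 : j + k + 2 - (j + 2) = k := by omega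
  simp only [F, h1, h2, h3]
  generalize (X 0 : MvPolynomial (Fin 2) ℂ) = u
  generalize (X 1 : MvPolynomial (Fin 2) ℂ) = v
  simp only [pow_add _ k 2, pow_add _ j 2]
  generalize (v - -(u + v)) ^ j = a
  generalize (-(u + v) - u) ^ j = b
  generalize (u - v) ^ j = c
  generalize (-(u + v)) ^ k = d
  ring
end

section
/- If n is a positive integer divisible by 3, then the polynomial u² + uv + v² does not divide the polynomial F_{n,1} in ℂ[u,v]. (In particular F_{n,1} ≠ 0 for such n.) -/
open MvPolynomial

/-- Lemma 1.2(c): if `n` is a positive integer divisible by 3, then `u² + uv + v²` does not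
divide `F_{n,1}`; in particular `F_{n,1} ≠ 0`. -/
theorem stmt_3 (n : ℕ) (hn : 0 < n) (h3 : 3 ∣ n) :
    ¬ ((X 0 : MvPolynomial (Fin 2) ℂ) ^ 2 + X 0 * X 1 + X 1 ^ 2 ∣ F n 1)
      ∧ F n 1 ≠ 0 := by
  obtain ⟨s, hs⟩ := IsAlgClosed.exists_pow_nat_eq (-3 : ℂ) (n := 2) (by norm_num)
  have hs0 : s ≠ 0 := by
    rintro rfl
    norm_num at hs
  obtain ⟨z, hz⟩ : ∃ z : ℂ, z = (-1 + s) / 2 := ⟨_, rfl⟩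
  have hsz : s = 2 * z + 1 := by rw [hz]; ring
  have hq : z ^ 2 + z + 1 = 0 := by
    rw [hsz] at hs
    linear_combination hs / 4
  have hz3 : z ^ 3 = 1 := by linear_combination (z - 1) * hq
  have hw : -(1 + z) = z ^ 2 := by linear_combination -hq
  have key : eval ![1, z] (F n 1) = 3 * s := by
    obtain ⟨m, rfl⟩ := h3
    obtain ⟨k, rfl⟩ : ∃ k, m = k + 1 := ⟨m - 1, by omega⟩
    have hk : 3 * (k + 1) - 1 = 3 * k + 2 := by omega
    have e1 : z ^ (3 * k + 2) = z ^ 2 := by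
      rw [pow_add, pow_mul, hz3, one_pow, one_mul]
    have e2 : (z ^ 2) ^ (3 * k + 2) = z := by
      rw [← pow_mul, mul_comm, pow_mul, e1]
      linear_combination z * hz3
    simp only [F, hk, map_add, map_mul, map_pow, map_sub, map_neg, eval_X,
      Matrix.cons_val_zero, Matrix.cons_val_one, hw, e1, e2, one_pow, pow_one]
    rw [hsz]
    linear_combination (z ^ 2 - z - 3) * hq
  have hne : eval ![1, z] (F n 1) ≠ 0 := by
    rw [key]
    exact mul_ne_zero (by norm_num) hs0
  refine ⟨?_, fun h => hne (by rw [h, map_zero])⟩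
  rintro ⟨q, h⟩
  apply hne
  rw [h]
  simp only [map_add, map_mul, map_pow, eval_X, Matrix.cons_val_zero, Matrix.cons_val_one]
  linear_combination (eval ![1, z] q) * hq
end

section
/- Let N be a positive odd integer and m ≥ 0 an integer. If the family S_{N,m} is linearly independent over ℂ, then the family S_{N,m+2} is linearly independent over ℂ. -/
open MvPolynomial

/-- The (rescaled) Laplacian invariant under the cyclic group permuting `u, v, w`. -/
noncomputable def lapD : MvPolynomial (Fin 2) ℂ →ₗ[ℂ] MvPolynomial (Fin 2) ℂ :=
  (pderiv (R := ℂ) (0 : Fin 2)).toLinearMap ∘ₗ (pderiv (R := ℂ) (0 : Fin 2)).toLinearMap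
  - (pderiv (R := ℂ) (0 : Fin 2)).toLinearMap ∘ₗ (pderiv (R := ℂ) (1 : Fin 2)).toLinearMap
  + (pderiv (R := ℂ) (1 : Fin 2)).toLinearMap ∘ₗ (pderiv (R := ℂ) (1 : Fin 2)).toLinearMap

theorem lapD_apply (f : MvPolynomial (Fin 2) ℂ) :
    lapD f = pderiv 0 (pderiv 0 f) - pderiv 0 (pderiv 1 f) + pderiv 1 (pderiv 1 f) := rfl

theorem pd_pow_mul_one (i : Fin 2) (a b : MvPolynomial (Fin 2) ℂ) (p : ℕ) (r s : ℤ)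
    (ha : pderiv i a = (r : MvPolynomial (Fin 2) ℂ))
    (hb : pderiv i b = (s : MvPolynomial (Fin 2) ℂ)) :
    pderiv i (a ^ (p + 1) * b) = (p + 1 : MvPolynomial (Fin 2) ℂ) * r * (a ^ p * b)
      + s * a ^ (p + 1) := by
  rw [Derivation.leibniz, Derivation.leibniz_pow, ha, hb]
  simp only [smul_eq_mul, nsmul_eq_mul, Nat.add_sub_cancel]
  push_cast; ring

theorem pd_pow (i : Fin 2) (a : MvPolynomial (Fin 2) ℂ) (p : ℕ) (r : ℤ)
    (ha : pderiv i a = (r : MvPolynomial (Fin 2) ℂ)) :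
    pderiv i (a ^ (p + 1)) = (p + 1 : MvPolynomial (Fin 2) ℂ) * r * a ^ p := by
  rw [Derivation.leibniz_pow, ha]
  simp only [smul_eq_mul, nsmul_eq_mul, Nat.add_sub_cancel]
  push_cast; ring

theorem pd_int (i : Fin 2) (r : ℤ) : pderiv i (r : MvPolynomial (Fin 2) ℂ) = 0 :=
  Derivation.map_intCast _ _

theorem pd_nat (i : Fin 2) (r : ℕ) : pderiv i (r : MvPolynomial (Fin 2) ℂ) = 0 :=
  Derivation.map_natCast _ _

theorem lapD_one (a b : MvPolynomial (Fin 2) ℂ) (p : ℕ) (a0 a1 b0 b1 : ℤ)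
    (ha0 : pderiv 0 a = (a0 : MvPolynomial (Fin 2) ℂ))
    (ha1 : pderiv 1 a = (a1 : MvPolynomial (Fin 2) ℂ))
    (hb0 : pderiv 0 b = (b0 : MvPolynomial (Fin 2) ℂ))
    (hb1 : pderiv 1 b = (b1 : MvPolynomial (Fin 2) ℂ))
    (h1 : a0 * a0 - a0 * a1 + a1 * a1 = 1)
    (h2 : 2 * a0 * b0 - a0 * b1 - a1 * b0 + 2 * a1 * b1 = 0) :
    lapD (a ^ (p + 2) * b) =
      ((p + 2) * (p + 1) : MvPolynomial (Fin 2) ℂ) * (a ^ p * b) := by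
  have h1' := congrArg (Int.cast : ℤ → MvPolynomial (Fin 2) ℂ) h1
  have h2' := congrArg (Int.cast : ℤ → MvPolynomial (Fin 2) ℂ) h2
  push_cast at h1' h2'
  rw [lapD_apply]
  simp only [Derivation.leibniz, Derivation.leibniz_pow, ha0, ha1, hb0, hb1, map_add,
    smul_eq_mul, nsmul_eq_mul, pd_int, pd_nat]
  simp only [show p + 2 - 1 = p + 1 by omega, show p + 1 - 1 = p by omega]
  push_cast
  linear_combination ((p + 2) * (p + 1) : MvPolynomial (Fin 2) ℂ) * (a ^ p * b) * h1'
    + ((p + 2) : MvPolynomial (Fin 2) ℂ) * a ^ (p + 1) * h2'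

theorem lapD_two (a b : MvPolynomial (Fin 2) ℂ) (p q : ℕ) (a0 a1 b0 b1 : ℤ)
    (ha0 : pderiv 0 a = (a0 : MvPolynomial (Fin 2) ℂ))
    (ha1 : pderiv 1 a = (a1 : MvPolynomial (Fin 2) ℂ))
    (hb0 : pderiv 0 b = (b0 : MvPolynomial (Fin 2) ℂ))
    (hb1 : pderiv 1 b = (b1 : MvPolynomial (Fin 2) ℂ))
    (h1 : a0 * a0 - a0 * a1 + a1 * a1 = 1)
    (h2 : 2 * a0 * b0 - a0 * b1 - a1 * b0 + 2 * a1 * b1 = 0)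
    (h3 : b0 * b0 - b0 * b1 + b1 * b1 = 3) :
    lapD (a ^ (p + 2) * b ^ (q + 2)) =
      ((p + 2) * (p + 1) : MvPolynomial (Fin 2) ℂ) * (a ^ p * b ^ (q + 2))
      + (3 * (q + 2) * (q + 1) : MvPolynomial (Fin 2) ℂ) * (a ^ (p + 2) * b ^ q) := by
  have h1' := congrArg (Int.cast : ℤ → MvPolynomial (Fin 2) ℂ) h1
  have h2' := congrArg (Int.cast : ℤ → MvPolynomial (Fin 2) ℂ) h2
  have h3' := congrArg (Int.cast : ℤ → MvPolynomial (Fin 2) ℂ) h3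
  push_cast at h1' h2' h3'
  rw [lapD_apply]
  simp only [Derivation.leibniz, Derivation.leibniz_pow, ha0, ha1, hb0, hb1, map_add,
    smul_eq_mul, nsmul_eq_mul, pd_int, pd_nat]
  simp only [show ∀ p, p + 2 - 1 = p + 1 by omega, show ∀ p, p + 1 - 1 = p by omega]
  push_cast
  linear_combination ((p + 2) * (p + 1) : MvPolynomial (Fin 2) ℂ) * (a ^ p * b ^ (q + 2)) * h1'
    + ((p + 2) * (q + 2) : MvPolynomial (Fin 2) ℂ) * a ^ (p + 1) * b ^ (q + 1) * h2'
    + ((q + 2) * (q + 1) : MvPolynomial (Fin 2) ℂ) * (a ^ (p + 2) * b ^ q) * h3'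

theorem lapD_F_one (n : ℕ) (hn : 1 ≤ n) :
    lapD (F (n + 2) 1) = (((n + 1) * n : ℕ) : ℂ) • F n 1 := by
  obtain ⟨p, rfl⟩ : ∃ p, n = p + 1 := ⟨n - 1, by omega⟩
  simp only [F, pow_one, show p + 1 + 2 - 1 = p + 2 by omega, show p + 1 - 1 = p by omega, map_add]
  rw [lapD_one (X 0) _ p 1 0 1 2, lapD_one (X 1) _ p 0 1 (-2) (-1),
    lapD_one (-(X 0 + X 1)) _ p (-1) (-1) 1 (-1)]
  · rw [MvPolynomial.smul_eq_C_mul, map_natCast]; push_cast; ring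
  all_goals norm_num

theorem lapD_F_two (n q : ℕ) (hn : q + 2 ≤ n) :
    lapD (F (n + 2) (q + 2)) = (((n - q) * (n - q - 1) : ℕ) : ℂ) • F n (q + 2)
      + ((3 * (q + 2) * (q + 1) : ℕ) : ℂ) • F n q := by
  obtain ⟨p, rfl⟩ : ∃ p, n = p + (q + 2) := ⟨n - (q + 2), by omega⟩
  simp only [F, show p + (q + 2) + 2 - (q + 2) = p + 2 by omega,
    show p + (q + 2) - (q + 2) = p by omega, show p + (q + 2) - q = p + 2 by omega,
    show p + 2 - 1 = p + 1 by omega, map_add]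
  rw [lapD_two (X 0) _ p q 1 0 1 2, lapD_two (X 1) _ p q 0 1 (-2) (-1),
    lapD_two (-(X 0 + X 1)) _ p q (-1) (-1) 1 (-1)]
  · rw [MvPolynomial.smul_eq_C_mul, MvPolynomial.smul_eq_C_mul, map_natCast, map_natCast]
    push_cast; ring
  all_goals norm_num

/-- Odd indices up to `2K+1`. -/
def oddEquiv (K : ℕ) : Fin (K + 1) ≃ {j : ℕ // 1 ≤ j ∧ j ≤ 2 * K + 1 ∧ Odd j} where
  toFun k := ⟨2 * k.1 + 1, by omega, by omega, ⟨k.1, rfl⟩⟩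
  invFun j := ⟨j.1 / 2, by have := j.2; omega⟩
  left_inv k := by ext; simp; omega
  right_inv j := by
    obtain ⟨j, h1, h2, k, rfl⟩ := j
    simp; omega

theorem li_iff (K n : ℕ) :
    LinearIndependent ℂ (fun j : {j : ℕ // 1 ≤ j ∧ j ≤ 2 * K + 1 ∧ Odd j} => F n j.1) ↔
    ∀ c : ℕ → ℂ, ∑ k ∈ Finset.range (K + 1), c k • F n (2 * k + 1) = 0 → ∀ k ≤ K, c k = 0 := by
  rw [← linearIndependent_equiv (oddEquiv K), Fintype.linearIndependent_iff]
  constructor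
  · intro h c hc k hk
    refine h (fun i => c i.1) ?_ ⟨k, by omega⟩
    rw [Finset.sum_range] at hc
    exact hc
  · intro h g hg i
    have := h (fun k => if hk : k < K + 1 then g ⟨k, hk⟩ else 0) ?_ i.1 (by omega)
    · simpa only [dif_pos i.2] using this
    · rw [Finset.sum_range, ← hg]
      refine Finset.sum_congr rfl fun i _ => ?_
      simp only [dif_pos i.2]; rfl

theorem lapD_F_odd (n k : ℕ) (hn : 2 * k + 1 ≤ n) :
    lapD (F (n + 2) (2 * k + 1)) =
      (((n + 1 - 2 * k) * (n - 2 * k) : ℕ) : ℂ) • F n (2 * k + 1)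
      + ((3 * (2 * k + 1) * (2 * k) : ℕ) : ℂ) • F n (2 * k - 1) := by
  rcases k with _ | k
  · simpa using lapD_F_one n hn
  · have := lapD_F_two n (2 * k + 1) (by omega)
    rw [show 2 * (k + 1) + 1 = 2 * k + 1 + 2 by ring, this]
    rw [show n - (2 * k + 1) = n + 1 - 2 * (k + 1) by omega,
      show n + 1 - 2 * (k + 1) - 1 = n - 2 * (k + 1) by omega,
      show 2 * (k + 1) - 1 = 2 * k + 1 by omega, show 2 * k + 1 + 1 = 2 * (k + 1) by ring]

/-- Corollary 1.3(a): if the family `S_{N,m}` is linearly independent over `ℂ`,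
then so is `S_{N,m+2}`. -/
theorem stmt_4 (N m : ℕ) (hNodd : Odd N) (hNpos : 1 ≤ N)
    (h : LinearIndependent ℂ
      (fun j : {j : ℕ // 1 ≤ j ∧ j ≤ N ∧ Odd j} => F (N + m) j.1)) :
    LinearIndependent ℂ
      (fun j : {j : ℕ // 1 ≤ j ∧ j ≤ N ∧ Odd j} => F (N + (m + 2)) j.1) := by
  obtain ⟨K, rfl⟩ := hNodd
  rw [li_iff] at h ⊢
  intro c hc
  rw [← add_assoc] at hc
  generalize hn : 2 * K + 1 + m = n at *
  set d : ℕ → ℂ := fun k => if k ≤ K then c k else 0 with hd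
  have hdc : ∀ k ≤ K, d k = c k := fun k hk => by simp [hd, hk]
  have hdK : d (K + 1) = 0 := by simp [hd]
  set A : ℕ → ℂ := fun k => (((n + 1 - 2 * k) * (n - 2 * k) : ℕ) : ℂ) with hA
  set B : ℕ → ℂ := fun k => ((3 * (2 * k + 1) * (2 * k) : ℕ) : ℂ) with hB
  have key := h (fun k => d k * A k + d (k + 1) * B (k + 1)) (by
    have h1 := congrArg lapD hc
    rw [map_sum, map_zero] at h1
    have h2 : ∑ k ∈ Finset.range (K + 1), ((d k * A k) • F n (2 * k + 1)
        + (d k * B k) • F n (2 * k - 1)) = 0 := by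
      rw [← h1]
      refine Finset.sum_congr rfl fun k hk => ?_
      have hk' : k ≤ K := by simpa [Nat.lt_succ_iff] using hk
      rw [map_smul, lapD_F_odd n k (by omega), hdc k hk', smul_add, smul_smul, smul_smul]
    simp only [add_smul]
    rw [Finset.sum_add_distrib] at h2 ⊢
    rw [Finset.sum_range_succ' (fun k => (d k * B k) • F n (2 * k - 1))] at h2
    rw [Finset.sum_range_succ (fun k => (d (k + 1) * B (k + 1)) • F n (2 * k + 1)), hdK]
    have hB0 : B 0 = 0 := by simp [hB]
    rw [hB0] at h2
    simp only [show ∀ k, 2 * (k + 1) - 1 = 2 * k + 1 by omega] at h2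
    simpa using h2)
  have fin : ∀ i ≤ K + 1, d (K + 1 - i) = 0 := by
    intro i
    induction i with
    | zero => intro _; simpa using hdK
    | succ i ih =>
      intro hi
      have e := key (K + 1 - (i + 1)) (by omega)
      simp only [show K + 1 - (i + 1) + 1 = K + 1 - i by omega, ih (by omega), zero_mul,
        add_zero] at e
      rcases mul_eq_zero.1 e with e | e
      · exact e
      · exfalso
        simp only [hA, Nat.cast_eq_zero, mul_eq_zero] at e
        omega
  intro k hk
  have := fin (K + 1 - k) (by omega)
  rw [show K + 1 - (K + 1 - k) = k by omega, hdc k hk] at this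
  exact this
end

section
/- Let N be a positive odd integer and m ≥ 0 an integer such that N + m + 2 is divisible by 3. If the family S_{N,m} is linearly independent over ℂ, then the family S_{N+2,m} is linearly independent over ℂ. -/
open MvPolynomial

lemma F_rec (n j : ℕ) (hj : j ≤ n) :
    F (n + 2) (j + 2) + 3 * F (n + 2) j =
      (2 * (X 0 ^ 2 + X 1 ^ 2 + (X 0 + X 1) ^ 2)) * F n j := by
  obtain ⟨k, rfl⟩ := Nat.exists_eq_add_of_le hj
  have h1 : j + k + 2 - (j + 2) = k := by omega
  have h2 : j + k + 2 - j = k + 2 := by omega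
  have h3 : j + k - j = k := by omega
  simp only [F, h1, h2, h3]
  ring

lemma exists_omega : ∃ z : ℂ, z ^ 2 + z + 1 = 0 := by
  obtain ⟨s, hs⟩ := IsAlgClosed.exists_pow_nat_eq (discrim (1 : ℂ) 1 1) (n := 2) (by norm_num)
  obtain ⟨z, hz⟩ := exists_quadratic_eq_zero (a := (1 : ℂ)) (b := 1) (c := 1) one_ne_zero ⟨s, by rw [← hs, sq]⟩
  exact ⟨z, by linear_combination hz⟩

lemma F_one_eval (z : ℂ) (hz : z ^ 2 + z + 1 = 0) (k : ℕ) :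
    aeval ![1, z] (F (3 * k + 3) 1) ≠ 0 := by
  have hz3 : z ^ 3 = 1 := by linear_combination (z - 1) * hz
  have hw : -(1 + z) = z ^ 2 := by linear_combination -hz
  have e1 : 3 * k + 3 - 1 = 3 * k + 2 := by omega
  have p1 : z ^ (3 * k + 2) = z ^ 2 := by rw [pow_add, pow_mul, hz3]; simp
  have p2 : (z ^ 2) ^ (3 * k + 2) = z := by
    rw [← pow_mul, mul_comm, pow_mul, p1]; linear_combination z * hz3
  simp only [F, e1, map_add, map_mul, map_pow, map_sub, map_neg, aeval_X, Matrix.cons_val_zero,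
    Matrix.cons_val_one, hw, p1, p2, one_pow, pow_one]
  intro h
  have h' : z = z ^ 2 := by linear_combination h / 3 - z / 3 * hz3
  have h0 : 2 * z = -1 := by linear_combination hz + h'
  have : (3 : ℂ) = 0 := by linear_combination 4 * hz - (2 * z + 1) * h0
  norm_num at this

/-- Corollary 1.3(b): if `3 ∣ N + m + 2` and the family `S_{N,m}` is linearly independent
over `ℂ`, then so is `S_{N+2,m}`. -/
theorem stmt_5 (N m : ℕ) (hNodd : Odd N) (hNpos : 1 ≤ N) (h3 : 3 ∣ N + m + 2)
    (h : LinearIndependent ℂ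
      (fun j : {j : ℕ // 1 ≤ j ∧ j ≤ N ∧ Odd j} => F (N + m) j.1)) :
    LinearIndependent ℂ
      (fun j : {j : ℕ // 1 ≤ j ∧ j ≤ N + 2 ∧ Odd j} => F (N + 2 + m) j.1) := by
  have fin : ∀ M : ℕ, Finite {j : ℕ // 1 ≤ j ∧ j ≤ M ∧ Odd j} := fun M =>
    Set.Finite.subset (Set.finite_Iic M) (fun j hj => hj.2.1)
  have := fin N
  have := fin (N + 2)
  have := Fintype.ofFinite {j : ℕ // 1 ≤ j ∧ j ≤ N ∧ Odd j}
  have := Fintype.ofFinite {j : ℕ // 1 ≤ j ∧ j ≤ N + 2 ∧ Odd j}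
  obtain ⟨z, hz⟩ := exists_omega
  set e : MvPolynomial (Fin 2) ℂ := 2 * (X 0 ^ 2 + X 1 ^ 2 + (X 0 + X 1) ^ 2) with he
  have hez : aeval ![1, z] e = 0 := by
    simp only [he, map_mul, map_add, map_pow, aeval_X, Matrix.cons_val_zero,
      Matrix.cons_val_one, map_ofNat]
    linear_combination 4 * hz
  have he0 : e ≠ 0 := by
    intro h0
    have := congrArg (aeval ![(1 : ℂ), 0]) h0
    simp [he] at this
  have hef : LinearIndependent ℂ
      (fun j : {j : ℕ // 1 ≤ j ∧ j ≤ N ∧ Odd j} => e * F (N + m) j.1) :=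
    h.map' (LinearMap.mulLeft ℂ e) (LinearMap.ker_eq_bot.2 (mul_right_injective₀ he0))
  have hn : N + 2 + m = N + m + 2 := by omega
  have hg0 : F (N + 2 + m) 1 ∉ Submodule.span ℂ (Set.range
      (fun j : {j : ℕ // 1 ≤ j ∧ j ≤ N ∧ Odd j} => e * F (N + m) j.1)) := by
    intro hmem
    have hle : Submodule.span ℂ (Set.range
      (fun j : {j : ℕ // 1 ≤ j ∧ j ≤ N ∧ Odd j} => e * F (N + m) j.1)) ≤
        LinearMap.ker (aeval ![1, z] : MvPolynomial (Fin 2) ℂ →ₐ[ℂ] ℂ).toLinearMap := by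
      rw [Submodule.span_le]
      rintro _ ⟨j, rfl⟩
      change aeval ![1, z] (e * F (N + m) j.1) = 0
      rw [map_mul, hez, zero_mul]
    have h0 := hle hmem
    obtain ⟨k, hk⟩ := h3
    obtain ⟨l, rfl⟩ : ∃ l, k = l + 1 := ⟨k - 1, by omega⟩
    have : N + 2 + m = 3 * l + 3 := by omega
    rw [this] at h0
    exact F_one_eval z hz l (by simpa using h0)
  have hopt := linearIndependent_option'.2 ⟨hef, hg0⟩
  set S := Submodule.span ℂ (Set.range
    (fun j : {j : ℕ // 1 ≤ j ∧ j ≤ N + 2 ∧ Odd j} => F (N + 2 + m) j.1)) with hS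
  have hFS : ∀ j, 1 ≤ j → j ≤ N + 2 → Odd j → F (N + 2 + m) j ∈ S := fun j a b c =>
    Submodule.subset_span ⟨⟨j, a, b, c⟩, rfl⟩
  rw [linearIndependent_iff_card_le_finrank_span]
  have hfinS : Module.Finite ℂ S := Module.Finite.span_of_finite ℂ (Set.finite_range _)
  have hcard : Fintype.card {j : ℕ // 1 ≤ j ∧ j ≤ N + 2 ∧ Odd j} ≤
      Fintype.card (Option {j : ℕ // 1 ≤ j ∧ j ≤ N ∧ Odd j}) := by
    refine Fintype.card_le_of_surjective (fun o => Option.casesOn' o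
      ⟨1, le_rfl, by omega, odd_one⟩
      (fun j => ⟨j.1 + 2, by omega, by have := j.2; omega, j.2.2.2.add_even even_two⟩)) ?_
    rintro ⟨j, a, b, c⟩
    by_cases hj : j = 1
    · subst hj; exact ⟨none, rfl⟩
    · obtain ⟨k, rfl⟩ := c
      refine ⟨some ⟨2 * k + 1 - 2, by omega, by omega, ⟨k - 1, by omega⟩⟩, ?_⟩
      apply Subtype.ext
      change 2 * k + 1 - 2 + 2 = 2 * k + 1
      omega
  refine hcard.trans ?_
  rw [← finrank_span_eq_card hopt]
  refine Submodule.finrank_mono ?_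
  rw [Submodule.span_le]
  rintro _ ⟨o, rfl⟩
  cases o with
  | none => exact hFS 1 le_rfl (by omega) odd_one
  | some j =>
    obtain ⟨j, a, b, c⟩ := j
    change e * F (N + m) j ∈ S
    rw [he, ← F_rec _ _ (by omega), ← hn]
    refine S.add_mem (hFS _ (by omega) (by omega) (c.add_even even_two)) ?_
    have : (3 : MvPolynomial (Fin 2) ℂ) * F (N + 2 + m) j = (3 : ℂ) • F (N + 2 + m) j := by
      rw [MvPolynomial.smul_eq_C_mul, map_ofNat]
    rw [this]
    exact S.smul_mem _ (hFS _ a (by omega) c)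
end

section
/- Let N be a positive odd integer and let m be an integer with 0 ≤ m, and either m < 2N or m = 2N+1. Then the family of polynomials S_{N,m} = { F_{N+m,j} : 1 ≤ j ≤ N, j odd } is linearly dependent over ℂ. -/
open MvPolynomial

abbrev RR := MvPolynomial (Fin 2) ℂ

lemma hom_coeffs (q p : ℕ) : ∃ h : ℕ → ℂ, ∀ z y : RR,
    (z + y) ^ p * (z - y) ^ q
      = ∑ a ∈ Finset.range (p + q + 1), C (h a) * (z ^ a * y ^ (p + q - a)) := by
  have key : ∀ (n : ℕ) (h : ℕ → ℂ) (e : ℂ), ∃ h' : ℕ → ℂ, ∀ z y : RR,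
      (∑ a ∈ Finset.range (n + 1), C (h a) * (z ^ a * y ^ (n - a))) * (z + C e * y)
        = ∑ a ∈ Finset.range (n + 1 + 1), C (h' a) * (z ^ a * y ^ (n + 1 - a)) := by
    intro n h e
    refine ⟨fun a => (if a = 0 then 0 else h (a - 1)) + (if a = n + 1 then 0 else e * h a), ?_⟩
    intro z y
    simp only [C_add, add_mul, Finset.sum_add_distrib]
    rw [mul_add]
    congr 1
    · rw [Finset.sum_range_succ' _ (n + 1), Finset.sum_mul]
      simp only [Nat.add_sub_cancel, if_true, C_0, zero_mul, add_zero, Nat.succ_ne_zero, if_false]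
      refine Finset.sum_congr rfl fun a ha => ?_
      rw [show n + 1 - (a + 1) = n - a by omega]
      ring
    · rw [Finset.sum_range_succ _ (n + 1), Finset.sum_mul]
      simp only [if_true, C_0, zero_mul, add_zero]
      refine Finset.sum_congr rfl fun a ha => ?_
      have ha' := Finset.mem_range.1 ha
      rw [if_neg (by omega), show n + 1 - a = (n - a) + 1 by omega, C_mul]
      ring
  induction q with
  | zero =>
    induction p with
    | zero => exact ⟨fun _ => 1, fun z y => by simp⟩
    | succ p ih =>
      obtain ⟨h, hh⟩ := ih
      obtain ⟨h', hh'⟩ := key (p + 0) h 1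
      refine ⟨h', fun z y => ?_⟩
      have := hh' z y
      rw [← hh z y] at this
      rw [show p + 1 + 0 = p + 0 + 1 by omega, ← this]
      simp only [C_1]; ring
  | succ q ih =>
    obtain ⟨h, hh⟩ := ih
    obtain ⟨h', hh'⟩ := key (p + q) h (-1)
    refine ⟨h', fun z y => ?_⟩
    have := hh' z y
    rw [← hh z y] at this
    rw [← add_assoc, ← this]
    simp only [C_neg, C_1]; ring

noncomputable def PP (n : ℕ) (z y : RR) (a : ℕ) : RR := z ^ a * y ^ (n - a) - y ^ a * z ^ (n - a)

lemma rot_sum_mem (w : ℂ) (hw : w ^ 2 + w + 1 = 0) (z y : RR) (n j : ℕ) (hj : Odd j) (hjn : j ≤ n) :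
    (z + y) ^ (n - j) * (z - y) ^ j
    + (C w * z + C (w ^ 2) * y) ^ (n - j) * (C w * z - C (w ^ 2) * y) ^ j
    + (C (w ^ 2) * z + C w * y) ^ (n - j) * (C (w ^ 2) * z - C w * y) ^ j
    ∈ Submodule.span ℂ
      (((Finset.range (n + 1)).filter (fun a => 2 * a < n ∧ 3 ∣ a + 2 * (n - a))).image
        (PP n z y) : Set RR) := by
  obtain ⟨h, hh⟩ := hom_coeffs j (n - j)
  rw [show n - j + j = n by omega] at hh
  have h3 : w ^ 3 = 1 := by linear_combination (w - 1) * hw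
  have w1 : w ≠ 1 := by rintro rfl; norm_num at hw
  have anti : ∀ z y : RR, (z + y) ^ (n - j) * (z - y) ^ j
      = ∑ a ∈ Finset.range (n + 1), C (h a / 2) * (PP n z y a) := by
    intro z y
    have e1 := hh z y
    have e2 := hh y z
    have e3 : (y + z) ^ (n - j) * (y - z) ^ j = - ((z + y) ^ (n - j) * (z - y) ^ j) := by
      rw [← neg_sub z y, hj.neg_pow, add_comm y z]; ring
    rw [e3] at e2
    have e4 : ∑ a ∈ Finset.range (n + 1), C (h a / 2) * (PP n z y a)
      = C (1/2) * (∑ a ∈ Finset.range (n + 1), C (h a) * (z ^ a * y ^ (n - a))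
        - ∑ a ∈ Finset.range (n + 1), C (h a) * (y ^ a * z ^ (n - a))) := by
      rw [← Finset.sum_sub_distrib, Finset.mul_sum]
      refine Finset.sum_congr rfl fun a ha => ?_
      rw [PP, div_eq_mul_one_div, C_mul]; ring
    rw [e4, ← e1, ← e2]
    have : (C (1/2) : RR) * 2 = 1 := by
      rw [show (2 : RR) = C 2 from (map_ofNat C 2).symm, ← C_mul]; norm_num
    linear_combination (-(z + y) ^ (n - j) * (z - y) ^ j) * this
  rw [anti, anti, anti, ← Finset.sum_add_distrib, ← Finset.sum_add_distrib]
  refine Submodule.sum_mem _ fun a ha => ?_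
  have ha' := Finset.mem_range.1 ha
  have hP : C (h a / 2) * PP n z y a + C (h a / 2) * PP n (C w * z) (C (w ^ 2) * y) a
      + C (h a / 2) * PP n (C (w ^ 2) * z) (C w * y) a
      = C (h a / 2) * (C (1 + w ^ (a + 2 * (n - a)) + (w ^ (2 * a + (n - a)))) * (z ^ a * y ^ (n - a))
         - C (1 + w ^ (2 * a + (n - a)) + w ^ (a + 2 * (n - a))) * (y ^ a * z ^ (n - a))) := by
    simp only [PP, mul_pow, C_add, C_mul, C_pow, C_1, pow_add, pow_mul]; ring
  rw [hP]
  by_cases hd : 3 ∣ a + 2 * (n - a)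
  · have hd2 : 3 ∣ 2 * a + (n - a) := by omega
    obtain ⟨k, hk⟩ := hd
    obtain ⟨l, hl⟩ := hd2
    rw [hk, hl, pow_mul, pow_mul, h3, one_pow, one_pow, ← mul_sub, ← mul_assoc, ← C_mul,
      ← smul_eq_C_mul]
    apply Submodule.smul_mem
    change PP n z y a ∈ _
    rcases lt_trichotomy (2 * a) n with hlt | heq | hgt
    · apply Submodule.subset_span
      simp only [Finset.coe_image]
      exact ⟨a, by simp; omega, rfl⟩
    · have : PP n z y a = 0 := by rw [PP, show n - a = a by omega]; ring
      rw [this]; exact Submodule.zero_mem _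
    · have : PP n z y a = - PP n z y (n - a) := by
        rw [PP, PP, show n - (n - a) = a by omega]; ring
      rw [this]
      apply Submodule.neg_mem
      apply Submodule.subset_span
      simp only [Finset.coe_image]
      exact ⟨n - a, by simp; omega, rfl⟩
  · have key : ∀ e f : ℕ, ¬ 3 ∣ e → 3 ∣ e + f → 1 + w ^ e + w ^ f = 0 := by
      intro e f he hf
      have r : ∀ e, w ^ e = w ^ (e % 3) := by
        intro e
        conv_lhs => rw [← Nat.div_add_mod e 3, pow_add, pow_mul, h3, one_pow, one_mul]
      rw [r e, r f]
      have : (e % 3 = 1 ∧ f % 3 = 2) ∨ (e % 3 = 2 ∧ f % 3 = 1) := by omega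
      rcases this with ⟨h1, h2⟩ | ⟨h1, h2⟩ <;> rw [h1, h2] <;> linear_combination hw
    rw [key _ _ hd (by omega), key _ _ (by omega) (by omega)]
    simp

lemma F_mem (w : ℂ) (hw : w ^ 2 + w + 1 = 0) : ∃ z y : RR, ∀ n j : ℕ, Odd j → j ≤ n →
    F n j ∈ Submodule.span ℂ
      (((Finset.range (n + 1)).filter (fun a => 2 * a < n ∧ 3 ∣ a + 2 * (n - a))).image
        (PP n z y) : Set RR) := by
  have hT : (C (1/3) : RR) * 3 = 1 := by
    rw [show (3 : RR) = C 3 from (map_ofNat C 3).symm, ← C_mul]; norm_num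
  have hA : (C w : RR) ^ 2 + C w + 1 = 0 := by
    rw [← C_pow, ← C_1, ← C_add, ← C_add, hw, C_0]
  obtain ⟨T, hTd⟩ : ∃ T : RR, T = C (1/3) := ⟨_, rfl⟩
  obtain ⟨A, hAd⟩ : ∃ A : RR, A = C w := ⟨_, rfl⟩
  rw [← hTd] at hT
  rw [← hAd] at hA
  obtain ⟨u, hu⟩ : ∃ u : RR, u = X 0 := ⟨_, rfl⟩
  obtain ⟨v, hv⟩ : ∃ u : RR, u = X 1 := ⟨_, rfl⟩
  obtain ⟨z, hz⟩ : ∃ z : RR, z = T * (u + A ^ 2 * v + A * (-(u + v))) := ⟨_, rfl⟩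
  obtain ⟨y, hy⟩ : ∃ z : RR, z = T * (u + A * v + A ^ 2 * (-(u + v))) := ⟨_, rfl⟩
  refine ⟨z, y, fun n j hj hjn => ?_⟩
  have h0 := rot_sum_mem w hw z y n j hj hjn
  rw [C_pow, ← hAd] at h0
  have a1 : z + y = u := by grind
  have a2 : A * z + A ^ 2 * y = v := by grind
  have a3 : A ^ 2 * z + A * y = -(u + v) := by grind
  have b1 : (A - A ^ 2) * (z - y) = v - -(u + v) := by grind
  have b2 : (A - A ^ 2) * (A * z - A ^ 2 * y) = -(u + v) - u := by grind
  have b3 : (A - A ^ 2) * (A ^ 2 * z - A * y) = u - v := by grind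
  have : F n j = (w - w ^ 2) ^ j • ((z + y) ^ (n - j) * (z - y) ^ j
    + (A * z + A ^ 2 * y) ^ (n - j) * (A * z - A ^ 2 * y) ^ j
    + (A ^ 2 * z + A * y) ^ (n - j) * (A ^ 2 * z - A * y) ^ j) := by
    rw [smul_eq_C_mul, C_pow, C_sub, C_pow, ← hAd, a1, a2, a3]
    simp only [F]
    rw [← hu, ← hv, ← b1, ← b2, ← b3, mul_pow, mul_pow, mul_pow]
    ring
  rw [this]
  exact Submodule.smul_mem _ _ h0

/-- Remark 1.4: for `N` a positive odd integer and `m < 2N` or `m = 2N+1`, the family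
`S_{N,m} = {F_{N+m,j} : 1 ≤ j ≤ N, j odd}` is linearly dependent over `ℂ`. -/
theorem stmt_6 (N m : ℕ) (hNodd : Odd N) (hNpos : 1 ≤ N)
    (hm : m < 2 * N ∨ m = 2 * N + 1) :
    ¬ LinearIndependent ℂ
      (fun j : {j : ℕ // 1 ≤ j ∧ j ≤ N ∧ Odd j} => F (N + m) j.1) := by
  intro hli
  obtain ⟨w, hw⟩ : ∃ w : ℂ, w ^ 2 + w + 1 = 0 := by
    have hp := Complex.isPrimitiveRoot_exp 3 (by norm_num)
    refine ⟨?_, ?_⟩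
    · exact Complex.exp (2 * Real.pi * Complex.I / (3 : ℕ))
    · have := hp.geom_sum_eq_zero (by norm_num)
      simp only [Finset.sum_range_succ, Finset.sum_range_zero] at this
      linear_combination this
  obtain ⟨z, y, hF⟩ := F_mem w hw
  obtain ⟨k, hk⟩ := hNodd
  let g : Fin (k + 1) → {j : ℕ // 1 ≤ j ∧ j ≤ N ∧ Odd j} :=
    fun i => ⟨2 * i.1 + 1, by omega, by omega, ⟨i.1, rfl⟩⟩
  have hg : Function.Injective g := by
    intro i i' h
    have := congrArg Subtype.val h
    simp only [g] at this
    ext; omega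
  have hli2 := hli.comp g hg
  have hc := linearIndependent_le_span' _ hli2
    ((((Finset.range (N + m + 1)).filter
      (fun a => 2 * a < N + m ∧ 3 ∣ a + 2 * (N + m - a))).image (PP (N + m) z y) : Finset RR) : Set RR)
    (by
      rintro _ ⟨i, rfl⟩
      exact hF _ _ (g i).2.2.2 (by have := (g i).2.2.1; omega))
  simp only [Cardinal.mk_fin, Fintype.card_coe, Finset.coe_sort_coe] at hc
  have hc' := Nat.cast_le.1 hc
  have h1 := hc'.trans Finset.card_image_le
  have h2 : ((Finset.range (N + m + 1)).filter
      (fun a => 2 * a < N + m ∧ 3 ∣ a + 2 * (N + m - a))).card ≤ (Finset.range k).card := by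
    apply Finset.card_le_card_of_injOn (fun a => a / 3)
    · intro a ha
      simp only [Finset.coe_filter, Finset.mem_range, Set.mem_setOf_eq] at ha
      simp only [Finset.coe_range, Set.mem_Iio]
      omega
    · intro a ha b hb hab
      simp only [Finset.coe_filter, Finset.mem_range, Set.mem_setOf_eq] at ha hb
      simp only at hab
      omega
  rw [Finset.card_range] at h2
  omega
end

section
/- For all integers n and j with 1 ≤ j ≤ n and j odd, the polynomial (u−v)(u+2v)(2u+v) divides F_{n,j} in ℂ[u,v]. -/
open MvPolynomial

theorem aux_dvd {R : Type*} [CommRing R] (a x y z t p : R) (m j : ℕ) (hj : 1 ≤ j) (ho : Odd j)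
    (h1 : a ∣ x - z) (h2 : a ∣ y + t) (h3 : a ∣ p) (q : R) :
    a ∣ q * p ^ j + x ^ m * y ^ j + z ^ m * t ^ j := by
  have e : q * p ^ j + x ^ m * y ^ j + z ^ m * t ^ j
      = q * p ^ j + ((x ^ m - z ^ m) * y ^ j + z ^ m * (y ^ j + t ^ j)) := by ring
  rw [e]
  refine dvd_add (Dvd.dvd.mul_left (dvd_pow h3 (by omega)) _) (dvd_add ?_ ?_)
  · exact Dvd.dvd.mul_right (h1.trans (sub_dvd_pow_sub_pow _ _ _)) _
  · exact Dvd.dvd.mul_left (h2.trans (Odd.add_dvd_pow_add_pow _ _ ho)) _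

theorem aux_rel (p q a b c d : MvPolynomial (Fin 2) ℂ) (h0 : a * p + b * q = 3 * X 0)
    (h1 : c * p + d * q = 3 * X 1) : IsRelPrime p q := by
  intro r hp hq
  have h3 : (C (1/3) : MvPolynomial (Fin 2) ℂ) * 3 = 1 := by
    rw [show (3 : MvPolynomial (Fin 2) ℂ) = C 3 from (map_ofNat C 3).symm, ← C_mul]
    norm_num
  have k0 : r ∣ X 0 := by
    have : r ∣ C (1/3) * (3 * X 0) :=
      h0 ▸ Dvd.dvd.mul_left (dvd_add (hp.mul_left _) (hq.mul_left _)) _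
    rwa [← mul_assoc, h3, one_mul] at this
  have k1 : r ∣ X 1 := by
    have : r ∣ C (1/3) * (3 * X 1) :=
      h1 ▸ Dvd.dvd.mul_left (dvd_add (hp.mul_left _) (hq.mul_left _)) _
    rwa [← mul_assoc, h3, one_mul] at this
  have : IsRelPrime (X 0 : MvPolynomial (Fin 2) ℂ) (X 1) := by
    rw [(MvPolynomial.X_prime (i := (0 : Fin 2))).irreducible.isRelPrime_iff_not_dvd]
    simp [MvPolynomial.X_dvd_X]
  exact this k0 k1

/-- For `1 ≤ j ≤ n` with `j` odd, the polynomial `(u−v)(u+2v)(2u+v)` divides `F_{n,j}`. -/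
theorem stmt_7 (n j : ℕ) (hj : 1 ≤ j) (hjn : j ≤ n) (hodd : Odd j) :
    ((X 0 - X 1) * (X 0 + 2 * X 1) * (2 * X 0 + X 1) : MvPolynomial (Fin 2) ℂ) ∣ F n j := by
  have r1 : IsRelPrime (X 0 - X 1 : MvPolynomial (Fin 2) ℂ) (X 0 + 2 * X 1) :=
    aux_rel _ _ 2 1 (-1) 1 (by ring) (by ring)
  have r2 : IsRelPrime (X 0 - X 1 : MvPolynomial (Fin 2) ℂ) (2 * X 0 + X 1) :=
    aux_rel _ _ 1 1 (-2) 1 (by ring) (by ring)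
  have r3 : IsRelPrime (X 0 + 2 * X 1 : MvPolynomial (Fin 2) ℂ) (2 * X 0 + X 1) :=
    aux_rel _ _ (-1) 2 2 (-1) (by ring) (by ring)
  refine (r2.mul_left r3).mul_dvd (r1.mul_dvd ?_ ?_) ?_ <;> simp only [F]
  · rw [add_comm, ← add_assoc]
    exact aux_dvd _ _ _ _ _ _ _ _ hj hodd ⟨1, by ring⟩ ⟨-1, by ring⟩ ⟨1, by ring⟩ _
  · exact aux_dvd _ _ _ _ _ _ _ _ hj hodd ⟨1, by ring⟩ ⟨-1, by ring⟩ ⟨1, by ring⟩ _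
  · rw [add_comm (X 0 ^ (n - j) * _)]
    exact aux_dvd _ _ _ _ _ _ _ _ hj hodd ⟨1, by ring⟩ ⟨1, by ring⟩ ⟨-1, by ring⟩ _
end

section
/- Let φ be a polynomial with complex coefficients in one variable t satisfying the following three properties: (i) for every nonzero a ∈ ℂ, φ(a) = 0 implies φ(a^{−1}) = 0; (ii) φ(−2)·φ(3) = 0; (iii) for every nonzero a ∈ ℂ, φ(a) = 0 implies φ(a^{−2})·φ(a + a^{−1}) = 0. Then φ = 0. -/
theorem aux_height (p q : ℤ) (hq : q ≠ 0) (h : IsCoprime p q) :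
    ((p / q : ℚ).num) ^ 2 + ((p / q : ℚ).den : ℤ) ^ 2 = p ^ 2 + q ^ 2 := by
  rcases lt_or_gt_of_ne hq with hq' | hq'
  · have e : (p / q : ℚ) = ((-p : ℤ) : ℚ) / ((-q : ℤ) : ℚ) := by
      push_cast
      rw [neg_div_neg_eq]
    have h' : Nat.Coprime (-p).natAbs (-q).natAbs :=
      Int.isCoprime_iff_gcd_eq_one.mp h.neg_neg
    rw [e, Rat.num_div_eq_of_coprime (by omega) h', Rat.den_div_eq_of_coprime (by omega) h']
    ring
  · have h' : Nat.Coprime p.natAbs q.natAbs := Int.isCoprime_iff_gcd_eq_one.mp h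
    rw [Rat.num_div_eq_of_coprime hq' h', Rat.den_div_eq_of_coprime hq' h']

theorem aux_step (φ : Polynomial ℂ)
    (h3 : ∀ a : ℂ, a ≠ 0 → φ.eval a = 0 → φ.eval (a⁻¹ ^ 2) * φ.eval (a + a⁻¹) = 0)
    (p q : ℤ) (hp : p ≠ 0) (hq : q ≠ 0) (hc : IsCoprime p q) (hM : 5 ≤ p ^ 2 + q ^ 2)
    (hr : φ.eval ((p : ℂ) / q) = 0) :
    ∃ p' q' : ℤ, p' ≠ 0 ∧ q' ≠ 0 ∧ IsCoprime p' q' ∧ p ^ 2 + q ^ 2 < p' ^ 2 + q' ^ 2 ∧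
      φ.eval ((p' : ℂ) / q') = 0 := by
  have hpc : (p : ℂ) ≠ 0 := by exact_mod_cast hp
  have hqc : (q : ℂ) ≠ 0 := by exact_mod_cast hq
  have hp2 : 0 < p ^ 2 := by positivity
  have hq2 : 0 < q ^ 2 := by positivity
  rcases mul_eq_zero.mp (h3 _ (div_ne_zero hpc hqc) hr) with h | h
  · refine ⟨q ^ 2, p ^ 2, by positivity, by positivity, hc.symm.pow, ?_, ?_⟩
    · nlinarith [sq_nonneg (p ^ 2 - q ^ 2)]
    · rw [← h]
      congr 1
      push_cast
      field_simp
  · refine ⟨p ^ 2 + q ^ 2, p * q, by positivity, mul_ne_zero hp hq, ?_, ?_, ?_⟩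
    · refine IsCoprime.mul_right ?_ ?_
      · have : IsCoprime (q ^ 2 + p * p) p := (IsCoprime.pow_left hc.symm).add_mul_left_left p
        convert this using 1
        ring
      · have : IsCoprime (p ^ 2 + q * q) q := (IsCoprime.pow_left hc).add_mul_left_left q
        convert this using 1
        ring
    · nlinarith [sq_nonneg (p * q)]
    · rw [← h]
      congr 1
      push_cast
      field_simp

theorem stmt_10 (φ : Polynomial ℂ)
    (h1 : ∀ a : ℂ, a ≠ 0 → φ.eval a = 0 → φ.eval a⁻¹ = 0)
    (h2 : φ.eval (-2) * φ.eval 3 = 0)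
    (h3 : ∀ a : ℂ, a ≠ 0 → φ.eval a = 0 → φ.eval (a⁻¹ ^ 2) * φ.eval (a + a⁻¹) = 0) :
    φ = 0 := by
  by_contra hφ
  have key : ∀ n : ℕ, ∃ p q : ℤ, p ≠ 0 ∧ q ≠ 0 ∧ IsCoprime p q ∧ (n : ℤ) + 5 ≤ p ^ 2 + q ^ 2 ∧
      φ.eval ((p : ℂ) / q) = 0 := by
    intro n
    induction n with
    | zero =>
      rcases mul_eq_zero.mp h2 with h | h
      · exact ⟨-2, 1, by norm_num, by norm_num, isCoprime_one_right, by norm_num,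
          by simpa using h⟩
      · exact ⟨3, 1, by norm_num, by norm_num, isCoprime_one_right, by norm_num,
          by simpa using h⟩
    | succ n ih =>
      obtain ⟨p, q, hp, hq, hc, hM, hr⟩ := ih
      obtain ⟨p', q', hp', hq', hc', hM', hr'⟩ :=
        aux_step φ h3 p q hp hq hc (by omega) hr
      exact ⟨p', q', hp', hq', hc', by push_cast; omega, hr'⟩
  have hfin : {r : ℚ | φ.eval (r : ℂ) = 0}.Finite := by
    have h := (Polynomial.finite_setOf_isRoot hφ)
    exact Set.Finite.preimage (f := fun r : ℚ => (r : ℂ))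
      (Rat.cast_injective.injOn) h
  obtain ⟨B, hB⟩ := (hfin.image (fun r : ℚ => r.num ^ 2 + (r.den : ℤ) ^ 2)).bddAbove
  obtain ⟨p, q, hp, hq, hc, hM, hr⟩ := key B.toNat
  have := hB ⟨(p / q : ℚ), by simpa using hr, rfl⟩
  simp only [aux_height p q hq hc] at this
  omega
end

section
/- Let Δ be an integer with Δ ≥ 3 and let F ∈ ℂ[x,y] be a homogeneous polynomial of degree Δ−1 satisfying: (1) F(y,x) = (−1)^Δ F(x,y) (as polynomials); (2) F(0,x) = 0 for all x (i.e. F vanishes on the line x = 0); (3) F(−x,x) = 0 for all x; and (4) the identity F(x,−y)·F(x+y,−z) + F(y,−z)·F(y+z,−x) + F(z,−x)·F(x+z,−y) = 0 holds for all x, y, z. Then F = 0. -/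
open MvPolynomial

/-- The one-variable core of the argument. -/
lemma core_aux (n : ℕ) (hn : 2 ≤ n) (g : ℂ → ℂ → ℂ) (P : Polynomial ℂ)
    (hdeg : P.natDegree ≤ n)
    (hG : ∀ x y, y ≠ 0 → g x y = y ^ n * P.eval (x / y))
    (hanti : ∀ x y, g y x = - g x y)
    (hJ : ∀ x y z, g x y * g (x + y) z + g y z * g (y + z) x + g z x * g (x + z) y = 0) :
    P = 0 := by
  by_contra hP
  obtain ⟨Q, hPQ, hQ⟩ := Polynomial.exists_eq_pow_rootMultiplicity_mul_and_not_dvd P hP 0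
  generalize P.rootMultiplicity 0 = m at hPQ
  simp only [map_zero, sub_zero] at hPQ hQ
  have hQ0 : Q.eval 0 ≠ 0 := by
    rw [Polynomial.X_dvd_iff, Polynomial.coeff_zero_eq_eval_zero] at hQ
    exact hQ
  have hQne : Q ≠ 0 := by rintro rfl; simp at hQ0
  have hdegP : P.natDegree = m + Q.natDegree := by
    rw [hPQ, Polynomial.natDegree_mul (pow_ne_zero _ Polynomial.X_ne_zero) hQne]
    simp
  have hR : ∀ x y, y ≠ 0 → g x y = x ^ m * (y ^ n / y ^ m * Q.eval (x / y)) := by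
    intro x y hy
    rw [hG x y hy, hPQ]
    simp only [Polynomial.eval_mul, Polynomial.eval_pow, Polynomial.eval_X, div_pow]
    field_simp
  have hP1 : ∀ t, g t 1 = P.eval t := by
    intro t
    rw [hG t 1 one_ne_zero]; simp
  have key : ∀ t : ℂ, t ≠ 0 → t + 1 ≠ 0 →
      P.eval t * (t ^ n / t ^ m + 1 - (t + 1) ^ n / (t + 1) ^ m) = 0 := by
    intro t ht ht1
    let E : ℂ → ℂ := fun x =>
      (t ^ n / t ^ m * Q.eval (x / t)) * P.eval (x + t)
        - P.eval t * ((t + 1) ^ n / (t + 1) ^ m * Q.eval (x / (t + 1)))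
        - Q.eval x * (t ^ n * P.eval ((x + 1) / t))
    have hE : Continuous E := by
      have hp := P.continuous
      have hq := Q.continuous
      fun_prop
    have hE0 : E = fun _ => 0 := by
      refine Continuous.ext_on (dense_compl_singleton (0 : ℂ)) hE continuous_const ?_
      intro x hx
      have hx : x ≠ 0 := hx
      have h := hJ x t 1
      rw [hanti x (t + 1), hanti x 1, hR x t ht, hR x (t + 1) ht1, hR x 1 one_ne_zero,
        hP1, hP1, hG (x + 1) t ht] at h
      have h' : x ^ m * E x = 0 := by
        rw [← h]
        simp only [E, one_pow, div_one]
        ring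
      exact (mul_eq_zero.mp h').resolve_left (pow_ne_zero _ hx)
    have h := congrFun hE0 0
    have h5 : t ^ n * P.eval (1 / t) = - P.eval t := by
      rw [← hG 1 t ht, hanti t 1, hP1]
    simp only [E, zero_div, zero_add, h5] at h
    have h6 : Q.eval 0 * (P.eval t * (t ^ n / t ^ m + 1 - (t + 1) ^ n / (t + 1) ^ m)) = 0 := by
      linear_combination h
    exact (mul_eq_zero.mp h6).resolve_left hQ0
  have hpoly : P * ((Polynomial.X * (Polynomial.X + 1)) *
      (Polynomial.X ^ n * (Polynomial.X + 1) ^ m + Polynomial.X ^ m * (Polynomial.X + 1) ^ m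
        - (Polynomial.X + 1) ^ n * Polynomial.X ^ m)) = 0 := by
    apply Polynomial.funext
    intro t
    simp only [Polynomial.eval_mul, Polynomial.eval_add, Polynomial.eval_sub,
      Polynomial.eval_pow, Polynomial.eval_X, Polynomial.eval_one, Polynomial.eval_zero]
    by_cases ht : t = 0
    · simp [ht]
    by_cases ht1 : t + 1 = 0
    · rw [ht1]; simp
    have h := key t ht ht1
    rcases mul_eq_zero.mp h with h | h
    · simp [h]
    · have : t ^ n * (t + 1) ^ m + t ^ m * (t + 1) ^ m - (t + 1) ^ n * t ^ m = 0 := by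
        have h7 : t ^ n * (t + 1) ^ m + t ^ m * (t + 1) ^ m - (t + 1) ^ n * t ^ m
          = t ^ m * (t + 1) ^ m * (t ^ n / t ^ m + 1 - (t + 1) ^ n / (t + 1) ^ m) := by
          field_simp
        rw [h7, h, mul_zero]
      rw [this]; simp
  have h8 := congrArg (Polynomial.eval 1) ((mul_eq_zero.mp hpoly).resolve_left hP)
  simp only [Polynomial.eval_mul, Polynomial.eval_add, Polynomial.eval_sub,
      Polynomial.eval_pow, Polynomial.eval_X, Polynomial.eval_one, Polynomial.eval_zero] at h8
  norm_num at h8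
  have h9 : 2 ^ (m + 1) = 2 ^ n := by
    have : (2 : ℂ) ^ (m + 1) = 2 ^ n := by rw [pow_succ]; linear_combination h8
    exact_mod_cast this
  have hnm : m + 1 = n := Nat.pow_right_injective (le_refl 2) h9
  have hQdeg : Q.natDegree ≤ 1 := by omega
  obtain ⟨b, a, hab⟩ := Polynomial.exists_eq_X_add_C_of_natDegree_le_one hQdeg
  have e1 := hanti 1 1
  have e2 := hanti 2 1
  rw [hP1] at e1
  rw [hP1, hG 1 2 two_ne_zero, hPQ, hab, ← hnm] at e2
  rw [hPQ, hab] at e1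
  rw [hab] at hQ0
  simp at e1 e2 hQ0
  have e1' : a = -b := by linear_combination e1 / 2
  have h2m : (2 : ℂ) ^ m ≠ 0 := pow_ne_zero _ two_ne_zero
  field_simp at e2
  have e3 : b * ((2 : ℂ) ^ m - 1) = 0 := by
    rw [e1'] at e2
    rw [pow_succ] at e2
    apply mul_left_cancel₀ h2m
    linear_combination e2 / 2
  have h10 : (2 : ℂ) ^ m - 1 ≠ 0 := by
    intro h
    have h : (2 : ℂ) ^ m = 1 := by linear_combination h
    have h : 2 ^ m = 1 := by exact_mod_cast h
    have := Nat.one_lt_two_pow (n := m) (by omega)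
    omega
  have hb := (mul_eq_zero.mp e3).resolve_right h10
  apply hQ0
  rw [e1', hb, neg_zero]

lemma hom_eval (n : ℕ) (F : MvPolynomial (Fin 2) ℂ) (h : F.IsHomogeneous n) (c : ℂ)
    (x y : ℂ) : eval ![c * x, c * y] F = c ^ n * eval ![x, y] F := by
  rw [eval_eq', eval_eq', Finset.mul_sum]
  refine Finset.sum_congr rfl fun d hd => ?_
  have hd := h (mem_support_iff.mp hd)
  rw [Finsupp.weight_apply, Finsupp.sum_fintype _ _ (by simp)] at hd
  simp [Fin.sum_univ_two] at hd
  simp only [Fin.prod_univ_two, Matrix.cons_val_zero, Matrix.cons_val_one, ← hd, mul_pow, pow_add]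
  ring

theorem stmt_11 (Δ : ℕ) (hΔ : 3 ≤ Δ) (F : MvPolynomial (Fin 2) ℂ)
    (hhom : F.IsHomogeneous (Δ - 1))
    (h1 : rename (Equiv.swap (0 : Fin 2) 1) F = (-1 : MvPolynomial (Fin 2) ℂ) ^ Δ * F)
    (h2 : ∀ x : ℂ, eval ![0, x] F = 0)
    (h3 : ∀ x : ℂ, eval ![-x, x] F = 0)
    (h4 : ∀ x y z : ℂ,
      eval ![x, -y] F * eval ![x + y, -z] F
        + eval ![y, -z] F * eval ![y + z, -x] F
        + eval ![z, -x] F * eval ![x + z, -y] F = 0) :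
    F = 0 := by
  obtain ⟨n, rfl⟩ : ∃ n, Δ = n + 1 := ⟨Δ - 1, by omega⟩
  simp only [Nat.add_sub_cancel] at hhom
  have hsymm : ∀ x y : ℂ, eval ![y, x] F = (-1) ^ (n + 1) * eval ![x, y] F := by
    intro x y
    have h := congrArg (eval ![x, y]) h1
    rw [eval_rename] at h
    have e : (![x, y] ∘ (Equiv.swap (0 : Fin 2) 1)) = ![y, x] := by
      funext i; fin_cases i <;> simp
    rw [e] at h
    simpa using h
  have hanti : ∀ x y : ℂ, eval ![y, -x] F = - eval ![x, -y] F := by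
    intro x y
    have h := hom_eval n F hhom (-1) x (-y)
    simp only [neg_mul, one_mul, neg_neg] at h
    rw [hsymm (-x) y, h, ← mul_assoc, ← pow_add, Odd.neg_one_pow ⟨n, by ring⟩]
    ring
  let P : Polynomial ℂ := aeval ![Polynomial.X, -1] F
  have hPe : ∀ t, P.eval t = eval ![t, -1] F := by
    intro t
    simp only [P, aeval_def, eval₂_eq', eval_eq', Polynomial.eval_finsetSum]
    refine Finset.sum_congr rfl fun d _ => ?_
    simp [Fin.prod_univ_two]
  have hdeg : P.natDegree ≤ n := by
    simp only [P, aeval_def, eval₂_eq']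
    refine Polynomial.natDegree_sum_le_of_forall_le _ _ fun d hd => ?_
    have hd := hhom (mem_support_iff.mp hd)
    rw [Finsupp.weight_apply, Finsupp.sum_fintype _ _ (by simp)] at hd
    simp [Fin.sum_univ_two] at hd
    simp only [Fin.prod_univ_two, Matrix.cons_val_zero, Matrix.cons_val_one]
    have e : algebraMap ℂ (Polynomial ℂ) (coeff d F) * (Polynomial.X ^ d 0 * (-1) ^ d 1)
        = Polynomial.C (coeff d F * (-1) ^ d 1) * Polynomial.X ^ d 0 := by
      simp; ring
    rw [e]
    exact (Polynomial.natDegree_C_mul_X_pow_le _ _).trans (by omega)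
  have hG : ∀ x y : ℂ, y ≠ 0 → eval ![x, -y] F = y ^ n * P.eval (x / y) := by
    intro x y hy
    rw [hPe, ← hom_eval n F hhom, mul_div_cancel₀ _ hy]
    simp
  have hP := core_aux n (by omega) (fun x y => eval ![x, -y] F) P hdeg hG hanti h4
  have hz : ∀ x y : ℂ, eval ![x, -y] F = 0 := by
    intro x y
    by_cases hy : y = 0
    · rw [hy, hanti 0 x, h2]; simp
    · rw [hG x y hy, hP]; simp
  apply MvPolynomial.funext
  intro v
  have : v = ![v 0, - -v 1] := by
    funext i; fin_cases i <;> simp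
  rw [this, hz]; simp
end

section
/- For every even integer Δ with Δ > 6, the polynomial f(x) = (x+1)^{Δ−1} − x^{Δ−1} − 1 does not divide the polynomial H(x) = (Δ−3)·x^{2Δ−2}·(x+1) − x^{2Δ−3} + x³ − (Δ−3)·x·(x+1) in ℚ[x]. -/
open Polynomial

theorem aux_dvd_s12 (R : Type) [CommRing R] (f x y z n A B : R) (hf : f = z - y - 1)
    (hA : f ∣ A) (hB : f ∣ B)
    (eA : A = y ^ 2 * ((n - 2) * (x * (x + 1)) - 1) - x ^ 2 * ((n - 2) * (x + 1) - x ^ 2))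
    (eB : B = z ^ 2 * ((n - 2) * (x * (x + 1)) - 1)
      - (x + 1) ^ 2 * (-(n - 2) * x - (x + 1) ^ 2)) :
    f ∣ ((2 * x + 1) * (n * (x * (x + 1)) + 1) + ((n - 2) * (x * (x + 1)) - 1)) ^ 2
      - 4 * x ^ 2 * ((n - 2) * (x + 1) - x ^ 2) * ((n - 2) * (x * (x + 1)) - 1) := by
  have hE : f ∣ (2 * y + 1) * ((n - 2) * (x * (x + 1)) - 1)
      + (2 * x + 1) * (n * (x * (x + 1)) + 1) := by
    have h := dvd_sub (dvd_sub hB hA)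
      (dvd_mul_right f ((z + y + 1) * ((n - 2) * (x * (x + 1)) - 1)))
    convert h using 1
    rw [eA, eB, hf]; ring
  have h := dvd_add (hE.mul_right ((2 * y + 1) * ((n - 2) * (x * (x + 1)) - 1)
      + (2 * x + 1) * (n * (x * (x + 1)) + 1) - 4 * y * ((n - 2) * (x * (x + 1)) - 1)))
      (hA.mul_right (4 * ((n - 2) * (x * (x + 1)) - 1)))
  convert h using 1
  rw [eA]; ring

/-- For every even integer `Δ > 6`, the polynomial `f(x) = (x+1)^{Δ−1} − x^{Δ−1} − 1`
does not divide `H(x) = (Δ−3)x^{2Δ−2}(x+1) − x^{2Δ−3} + x³ − (Δ−3)x(x+1)` in `ℚ[x]`. -/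
theorem stmt_12 (Δ : ℕ) (hΔeven : Even Δ) (hΔ : 6 < Δ) :
    ¬ (((X + 1) ^ (Δ - 1) - X ^ (Δ - 1) - 1 : Polynomial ℚ) ∣
        (C ((Δ : ℚ) - 3) * X ^ (2 * Δ - 2) * (X + 1) - X ^ (2 * Δ - 3) + X ^ 3
          - C ((Δ : ℚ) - 3) * X * (X + 1))) := by
  intro hdvd
  obtain ⟨n, rfl⟩ : ∃ n, Δ = n + 1 := ⟨Δ - 1, by omega⟩
  have hodd : Odd n := by
    rcases Nat.even_or_odd n with h | h
    · exact absurd hΔeven (by simpa [Nat.even_add_one] using h)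
    · exact h
  have e1 : 2 * (n + 1) - 2 = n * 2 := by omega
  have e2 : 2 * (n + 1) - 3 = 2 * n - 1 := by omega
  have e3 : (((n + 1 : ℕ) : ℚ) - 3) = (n : ℚ) - 2 := by push_cast; ring
  rw [e1, e2, e3, Nat.add_sub_cancel] at hdvd
  have hodd2 : Odd (2 * n - 1) := ⟨n - 1, by omega⟩
  have hC : (C ((n : ℚ) - 2) : ℚ[X]) = C (n : ℚ) - 2 := by
    rw [C_sub]; rfl
  have hcomp := map_dvd (compRingHom (-1 - X : ℚ[X])) hdvd
  simp only [coe_compRingHom_apply, sub_comp, add_comp, mul_comp, pow_comp, X_comp, C_comp,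
    one_comp] at hcomp
  have hs1 : (-1 - X + 1 : ℚ[X]) = -X := by ring
  have hs2 : (-1 - X : ℚ[X]) = -(X + 1) := by ring
  rw [hs1, hs2, hodd.neg_pow, hodd.neg_pow, hodd2.neg_pow, Even.neg_pow ⟨n, by ring⟩] at hcomp
  have hff : (-X ^ n - -(X + 1) ^ n - 1 : ℚ[X]) = (X + 1) ^ n - X ^ n - 1 := by ring
  rw [hff] at hcomp
  have hpow : ∀ t : ℚ[X], t ^ (2 * n - 1) * t = (t ^ n) ^ 2 := by
    intro t
    rw [← pow_succ, ← pow_mul]; congr 1; omega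
  have hP := aux_dvd_s12 ℚ[X] _ X (X ^ n) ((X + 1) ^ n) (C (n : ℚ)) _ _ rfl
    (hdvd.mul_right X) (hcomp.mul_right (-(X + 1)))
    (by rw [hC, ← hpow X, pow_mul]; linear_combination (C (n:ℚ) - 2) * X * (X + 1) * (-hpow X))
    (by rw [hC, ← hpow (X + 1), pow_mul]
        linear_combination (C (n:ℚ) - 2) * X * (X + 1) * (-hpow (X + 1)))
  set f : ℚ[X] := (X + 1) ^ n - X ^ n - 1 with hf
  have hfdeg : n - 1 ≤ f.natDegree := by
    apply le_natDegree_of_ne_zero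
    have h1 : (1 : ℚ[X]).coeff (n - 1) = 0 := by
      rw [coeff_one, if_neg (by omega)]
    rw [hf, coeff_sub, coeff_sub, coeff_X_add_one_pow, coeff_X_pow, if_neg (by omega), h1,
      Nat.choose_symm_of_eq_add (show n = (n - 1) + 1 by omega)]
    simp; omega
  set P : ℚ[X] := ((2 * X + 1) * (C (n : ℚ) * (X * (X + 1)) + 1)
      + ((C (n : ℚ) - 2) * (X * (X + 1)) - 1)) ^ 2
      - 4 * X ^ 2 * ((C (n : ℚ) - 2) * (X + 1) - X ^ 2)
        * ((C (n : ℚ) - 2) * (X * (X + 1)) - 1) with hPdef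
  have hPdeg : P.natDegree ≤ 6 := by
    rw [hPdef]; compute_degree
  have hn : (6 : ℚ) ≤ n := by exact_mod_cast (by omega : 6 ≤ n)
  have hP0 : P ≠ 0 := by
    intro h
    have := congrArg (eval 1) h
    simp [hPdef] at this
    nlinarith
  obtain ⟨k, hk⟩ := hP
  have hf0 : f ≠ 0 := by rintro h; simp [h] at hk; exact hP0 hk
  have hk0 : k ≠ 0 := by rintro h; simp [h] at hk; exact hP0 hk
  have hd : P.natDegree = f.natDegree + k.natDegree := by rw [hk, natDegree_mul hf0 hk0]
  have hn7 : n = 7 := by obtain ⟨m, rfl⟩ := hodd; omega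
  have hkd : k.natDegree = 0 := by omega
  rw [eq_C_of_natDegree_eq_zero hkd] at hk
  have h1 := congrArg (eval 1) hk
  have h2 := congrArg (eval 2) hk
  rw [hPdef, hf, hn7] at h1 h2
  simp at h1 h2
  norm_num at h1 h2
  linarith
end
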